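/- Let L be a bounded lattice and → a preconditional on L. Let P = {(x, x→y) : x, y ∈ L}, with (a,b) ◁ (c,d) iff c ≰ b. Then the map f(a) = {(x, x→y) ∈ P : x ≤ a} is a complete embedding of (L,→) into (𝔏(P,◁), ↠_◁), which is an isomorphism if L is complete. -/

import Mathlib

/-- The closure operation `c_◁` on subsets of a relational frame `(X, ◁)`. -/
def cl {X : Type*} (lt : X → X → Prop) (A : Set X) : Set X :=
  {x | ∀ x', lt x' x → ∃ x'', lt x' x'' ∧ x'' ∈ A}

/-- The conditional operation `A ↠_◁ B` on subsets of a relational frame `(X, ◁)`. -/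
def condSet {X : Type*} (lt : X → X → Prop) (A B : Set X) : Set X :=
  {x | ∀ y, lt y x → y ∈ A → ∃ z, lt y z ∧ z ∈ A ∩ B}

/-- `→` is a preconditional on the bounded lattice `L`. -/
def Preconditional {L : Type*} [Lattice L] [BoundedOrder L] (imp : L → L → L) : Prop :=
  (∀ a : L, imp ⊤ a ≤ a) ∧
  (∀ a b : L, a ⊓ b ≤ imp a b) ∧
  (∀ a b : L, imp a b ≤ imp a (a ⊓ b)) ∧
  (∀ a b c : L, b ≤ a → imp a (imp b c) ≤ imp b c) ∧
  (∀ a b c : L, b ≤ c → imp a b ≤ imp a c)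

/-- The relation `◁` on a set `P` of pairs of lattice elements: `(a,b) ◁ (c,d)` iff `c ≰ b`. -/
def ltP {L : Type*} [Lattice L] (P : Set (L × L)) : ↥P → ↥P → Prop :=
  fun p q => ¬ (q.1.1 ≤ p.1.2)

/-- The map `f(a) = {(x,y) ∈ P : x ≤ a}`. -/
def emb {L : Type*} [Lattice L] (P : Set (L × L)) (a : L) : Set ↥P :=
  {p | p.1.1 ≤ a}

/-- The set of pairs `P = {(x, x→y) : x, y ∈ L}`. -/
def Pcond {L : Type*} [Lattice L] [BoundedOrder L] (imp : L → L → L) : Set (L × L) :=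
  {p | ∃ x y : L, p = (x, imp x y)}

theorem mem_cl_iff {L : Type*} [Lattice L] [BoundedOrder L] (imp : L → L → L)
    (himp : Preconditional imp) (A : Set ↥(Pcond imp)) (p : ↥(Pcond imp)) :
    p ∈ cl (ltP (Pcond imp)) A ↔ ∀ b : L, (∀ q ∈ A, q.1.1 ≤ b) → p.1.1 ≤ b := by
  obtain ⟨h1, h2, -, -, -⟩ := himp
  constructor
  · intro h b hb
    by_contra hp
    have e : imp ⊤ b = b := le_antisymm (h1 b) (by simpa using h2 ⊤ b)
    obtain ⟨q, hq, hqA⟩ := h ⟨(⊤, b), ⊤, b, by rw [e]⟩ hp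
    exact hq (hb q hqA)
  · intro h x' hx'
    by_contra hc
    push Not at hc
    exact hx' (h _ (fun q hq => by
      by_contra hn
      exact hc q hn hq))

/-- Representation of a bounded lattice with a preconditional `→`: the map
`f(a) = {(x, x→y) ∈ P : x ≤ a}` is a complete embedding of `(L,→)` into
`(𝔏(P,◁), ↠_◁)` (injective, lands in fixpoints, preserves all existing meets and joins,
and sends `a → b` to `f(a) ↠_◁ f(b)`), which is an isomorphism (surjective onto the
fixpoints) if `L` is complete. -/
theorem stmt_17 {L : Type*} [Lattice L] [BoundedOrder L] (imp : L → L → L)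
    (himp : Preconditional imp) :
    Function.Injective (emb (Pcond imp)) ∧
    (∀ a : L, cl (ltP (Pcond imp)) (emb (Pcond imp) a) = emb (Pcond imp) a) ∧
    (∀ (S : Set L) (a : L), IsGLB S a → emb (Pcond imp) a = ⋂ s ∈ S, emb (Pcond imp) s) ∧
    (∀ (S : Set L) (a : L), IsLUB S a →
      emb (Pcond imp) a = cl (ltP (Pcond imp)) (⋃ s ∈ S, emb (Pcond imp) s)) ∧
    (∀ a b : L, emb (Pcond imp) (imp a b) =
      condSet (ltP (Pcond imp)) (emb (Pcond imp) a) (emb (Pcond imp) b)) ∧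
    ((∀ S : Set L, ∃ a : L, IsLUB S a) →
      ∀ A : Set ↥(Pcond imp), cl (ltP (Pcond imp)) A = A →
        ∃ a : L, emb (Pcond imp) a = A) := by
  have mc := mem_cl_iff imp himp
  have pr : ∀ x : L, (x, imp x x) ∈ Pcond imp := fun x => ⟨x, x, rfl⟩
  refine ⟨?_, ?_, ?_, ?_, ?_, ?_⟩
  · intro a b hab
    apply le_antisymm
    · have : (⟨_, pr a⟩ : ↥(Pcond imp)) ∈ emb (Pcond imp) a := le_refl a
      rw [hab] at this
      exact this
    · have : (⟨_, pr b⟩ : ↥(Pcond imp)) ∈ emb (Pcond imp) b := le_refl b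
      rw [← hab] at this
      exact this
  · intro a
    ext p
    rw [mc]
    exact ⟨fun h => h a (fun q hq => hq), fun h b hb => le_trans h (hb ⟨_, pr a⟩ (le_refl a))⟩
  · intro S a h
    ext p
    simp only [Set.mem_iInter]
    exact ⟨fun hp s hs => le_trans hp (h.1 hs), fun hp => h.2 (fun s hs => hp s hs)⟩
  · intro S a h
    ext p
    rw [mc]
    simp only [Set.mem_iUnion]
    constructor
    · intro hp b hb
      exact le_trans hp (h.2 (fun s hs => hb ⟨_, pr s⟩ ⟨s, hs, le_refl s⟩))
    · intro hp
      refine hp a ?_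
      rintro q ⟨s, hs, hq⟩
      exact le_trans hq (h.1 hs)
  · obtain ⟨h1, h2, h3, h4, h5⟩ := himp
    intro a b
    ext p
    constructor
    · rintro hp ⟨_, u, v, rfl⟩ hy hu
      refine ⟨⟨_, pr (a ⊓ b)⟩, ?_, inf_le_left, inf_le_right⟩
      intro hle
      exact hy (le_trans hp (le_trans (h3 a b) (le_trans (h5 _ _ _ hle) (h4 a u v hu))))
    · intro hp
      by_contra hn
      obtain ⟨z, hz, hza, hzb⟩ := hp ⟨(a, imp a b), a, b, rfl⟩ hn (le_refl a)
      exact hz (le_trans (le_inf hza hzb) (h2 a b))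
  · intro hc A hA
    obtain ⟨a, ha⟩ := hc ((fun q : ↥(Pcond imp) => q.1.1) '' A)
    refine ⟨a, ?_⟩
    rw [← hA]
    ext p
    rw [mc]
    constructor
    · intro hp b hb
      refine le_trans hp (ha.2 ?_)
      rintro _ ⟨q, hq, rfl⟩
      exact hb q hq
    · intro hp
      exact hp a (fun q hq => ha.1 ⟨q, hq, rfl⟩)
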